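/- One has d_n^{s+1−i}·ρ_i ∈ ℤ for every odd integer i with 3 ≤ i ≤ s, and d_{n+1}^{s+1}·ρ_{0,θ} ∈ ℤ for every θ ∈ 𝓕_B, where d_m = lcm(1, 2, …, m). -/

import Mathlib

/-! The coefficients `a i k` are read off a Taylor expansion: `a i k` is the coefficient of
`X ^ (s + 1 - i)` in the power series of `R(t) (t + k) ^ (s + 1)` at `t = -k`, with `X = t + k`.
Let `S_d ⊆ ℚ⟦X⟧` be the subring of those `f` with `f(dX) ∈ ℤ⟦X⟧` (`scaledSubring`).
It suffices to factor this function into elements of `S_d` for `d = d_n`.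

* The denominator: `n! / ∏_{j ≠ k} (X + j - k)` is an integer times a product of series
  `1 / (1 + X / c)` with `c ∣ d` (`exists_inv_denominator`).
* The numerator: the factors `A₁ⁿ A₂ⁿ / m!^(…)`, where `m = n / den r`, are distributed over
  blocks of `m` consecutive linear factors. The block attached to `θ = a / b` is
  `(∏_{p ∣ b} p ^ (m / (p - 1))) ∏_{j < m} (b X + b j + a) / m!`. It takes integer values at
  integers: Legendre's formula handles the primes dividing `b`, and for the other primes an
  arithmetic progression of step `b` is, up to a unit, a run of consecutive integers
  (`fact_dvd_prod`). A polynomial of degree at most `n` taking integer values on `ℕ` lies in `S_d`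
  by Newton's interpolation formula, since `binom(X, l) = (X / l) ∏_{0 < i < l} (X / i - 1)`
  (`scaled_of_intValued`).

Hence `d_n ^ (s + 1 - i) * a i k ∈ ℤ` (`coeff_integrality`), which gives the claim on `ρ_i`.

For `ρ_{0,θ}` with `θ = 1`, every `ℓ + 1 ≤ n + 1` divides `d_{n+1}`. For `θ < 1`, the function `R`
vanishes at `ℓ + θ - k` because `1 - θ` is again in the zero set, and
`D ^ (s + 1) ∑_i a i k / (ℓ + θ) ^ i`, with `D = d_{n+1}`, is `p`-integral for each prime `p`
(`shifted_sum_integrality`): either `D / (ℓ + θ)` is `p`-integral, or `ℓ + θ` is `p`-adically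
smaller than all the differences `j - k`. In the latter case the vanishing of `R` expresses the sum
through the summands at `j ≠ k`, whose denominators `ℓ + θ + j - k` have the valuation of `j - k`.
-/

open Finset Filter Real

noncomputable section

/-- The zero set `𝓕_B`: rationals `a/b` with `b ∈ Ψ`, `1 ≤ a ≤ b`, `gcd(a,b)=1`. -/
def zeroSet (Psi : Finset ℕ) : Finset ℚ :=
  Psi.biUnion fun b =>
    ((Finset.Icc 1 b).filter fun a => Nat.Coprime a b).image fun a : ℕ => (a : ℚ) / b

/-- `P_{B,den(r)} = 2·den(r)·LCM{p−1 : p prime, p ∣ b for some b ∈ Ψ}`. -/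
def Pconst (Psi : Finset ℕ) (r : ℚ) : ℕ :=
  2 * r.den * (Psi.biUnion Nat.primeFactors).lcm (fun p => p - 1)

/-- The major arithmetic factor `A₁(B) = ∏_{b ∈ Ψ} b^{(2r+1)φ(b)}`. -/
def A1 (Psi : Finset ℕ) (r : ℚ) : ℝ :=
  ∏ b ∈ Psi, (b : ℝ) ^ ((2 * (r : ℝ) + 1) * (Nat.totient b : ℝ))

/-- The minor arithmetic factor `A₂(B) = ∏_{b ∈ Ψ} ∏_{p ∣ b} p^{(2r+1)φ(b)/(p−1)}`. -/
def A2 (Psi : Finset ℕ) (r : ℚ) : ℝ :=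
  ∏ b ∈ Psi, ∏ p ∈ b.primeFactors,
    (p : ℝ) ^ ((2 * (r : ℝ) + 1) * (Nat.totient b : ℝ) / ((p : ℝ) - 1))

/-- The auxiliary rational function
`R_n(t) = A₁ⁿA₂ⁿ · (n!^{s+1}/((n/den(r))!)^{den(r)(2r+1)|𝓕_B|}) · (t−rn)·
∏_{θ∈𝓕_B}∏_{j=0}^{(2r+1)n−1}(t−rn+j+θ) / ∏_{j=0}^{n}(t+j)^{s+1}`.  Here, assuming
`P_{B,den(r)} ∣ n`, `(2r+1)n = 2·num(r)·(n/den(r)) + n` and `den(r)(2r+1) = 2·num(r)+den(r)`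
are the indicated natural numbers (the divisions are exact). -/
def Rfun (Psi : Finset ℕ) (r : ℚ) (s n : ℕ) (t : ℝ) : ℝ :=
  A1 Psi r ^ n * A2 Psi r ^ n *
    ((n.factorial : ℝ) ^ (s + 1) /
      (((n / r.den).factorial : ℝ)) ^ ((2 * r.num.toNat + r.den) * (zeroSet Psi).card)) *
    ((t - (r : ℝ) * n) *
      ∏ θ ∈ zeroSet Psi, ∏ j ∈ Finset.range (2 * (r.num.toNat * (n / r.den)) + n),
        (t - (r : ℝ) * n + (j : ℝ) + (θ : ℝ))) /
    ∏ j ∈ Finset.range (n + 1), (t + (j : ℝ)) ^ (s + 1)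


/-- `d_n = lcm(1, 2, …, n)`. -/
def dlcm (n : ℕ) : ℕ := (Finset.Icc 1 n).lcm id


/-! ### Divisibility and integrality criteria -/

/-- Up to the correction factor at the primes dividing `b`, a product of `m` terms of an arithmetic
progression of step `b` is divisible by `m!`. -/
theorem fact_dvd_prod (b m : ℕ) (hb : 0 < b) (A : ℤ) :
    (m.factorial : ℤ) ∣ (∏ p ∈ b.primeFactors, (p : ℤ) ^ (m / (p - 1))) *
      ∏ j ∈ range m, (A + b * j) := by
  rw [Int.natCast_dvd, Nat.dvd_iff_prime_pow_dvd_dvd]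
  intro p k hp hk
  rw [← Int.natCast_dvd]
  by_cases hpb : p ∣ b
  · refine Dvd.dvd.mul_right ?_ _
    have : Fact p.Prime := ⟨hp⟩
    have h1 : k ≤ padicValNat p m.factorial :=
      (padicValNat_dvd_iff_le (Nat.factorial_ne_zero m)).1 hk
    have h2 := sub_one_mul_padicValNat_factorial (p := p) m
    have h3 : k ≤ m / (p - 1) := by
      rw [Nat.le_div_iff_mul_le (Nat.sub_pos_of_lt hp.one_lt)]
      calc k * (p - 1) ≤ padicValNat p m.factorial * (p - 1) := Nat.mul_le_mul_right _ h1
        _ ≤ m := by rw [mul_comm, h2]; exact Nat.sub_le _ _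
    refine dvd_trans ?_ (dvd_prod_of_mem _ (Nat.mem_primeFactors.2 ⟨hp, hpb, hb.ne'⟩))
    push_cast
    exact pow_dvd_pow _ h3
  · refine Dvd.dvd.mul_left ?_ _
    have hcop : IsCoprime (b : ℤ) ((p ^ k : ℕ) : ℤ) := by
      rw [Nat.isCoprime_iff_coprime]
      exact (((Nat.Prime.coprime_iff_not_dvd hp).2 hpb).pow_left k).symm
    obtain ⟨u, v, huv⟩ := hcop
    -- modulo `p ^ k` the progression is `b` times a run of consecutive integers
    have hmod : ∏ j ∈ range m, (A + b * j) ≡ ∏ j ∈ range m, (b * (u * A + j))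
        [ZMOD ((p ^ k : ℕ) : ℤ)] := by
      refine Int.ModEq.prod fun j _ => ?_
      rw [Int.modEq_iff_dvd]
      exact ⟨-(v * A), by linear_combination A * huv⟩
    rw [← Int.modEq_zero_iff_dvd]
    refine hmod.trans ?_
    rw [Int.modEq_zero_iff_dvd, prod_mul_distrib]
    refine Dvd.dvd.mul_left (dvd_trans ?_ (Nat.factorial_coe_dvd_prod m (u * A))) _
    exact_mod_cast hk

/-- A rational number that is `p`-integral for every prime `p` is an integer. -/
theorem padic_int {x : ℚ} (h : ∀ p : ℕ, p.Prime → padicNorm p x ≤ 1) : ∃ z : ℤ, x = z := by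
  refine ⟨x.num, ?_⟩
  have hden : x.den = 1 := by
    by_contra hne
    obtain ⟨p, hp, hpd⟩ := Nat.exists_prime_and_dvd hne
    have : Fact p.Prime := ⟨hp⟩
    have h1 : padicNorm p x.den < 1 := (padicNorm.nat_lt_one_iff x.den).2 hpd
    have h2 : padicNorm p x.num < 1 := by
      have : (x.num : ℚ) = x * x.den := (Rat.mul_den_eq_num x).symm
      rw [this, padicNorm.mul]
      have := h p hp
      have h0 : 0 ≤ padicNorm p (x.den : ℚ) := padicNorm.nonneg _
      nlinarith
    have h3 : (p : ℤ) ∣ x.num := (padicNorm.int_lt_one_iff x.num).1 h2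
    have h4 : p ∣ x.num.natAbs := Int.natCast_dvd.1 h3
    exact hp.one_lt.ne' (Nat.dvd_one.1 (x.reduced ▸ Nat.dvd_gcd h4 hpd))
  exact (Rat.coe_int_num_of_den_eq_one hden).symm

/-! ### Power series with controlled denominators -/

/-- The subring of the power series `f ∈ ℚ⟦X⟧` such that `f(dX)` has integer coefficients. -/
def scaledSubring (d : ℕ) : Subring (PowerSeries ℚ) :=
  ((PowerSeries.map (Int.castRingHom ℚ)).range).comap (PowerSeries.rescale (d : ℚ))

theorem mem_scaled {d : ℕ} {f : PowerSeries ℚ} :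
    f ∈ scaledSubring d ↔ ∀ l, ∃ z : ℤ, (d : ℚ) ^ l * PowerSeries.coeff l f = z := by
  rw [scaledSubring, Subring.mem_comap, RingHom.mem_range]
  constructor
  · rintro ⟨g, hg⟩ l
    refine ⟨PowerSeries.coeff l g, ?_⟩
    rw [← PowerSeries.coeff_rescale, ← hg]; simp
  · intro h
    choose g hg using h
    refine ⟨PowerSeries.mk g, ?_⟩
    ext l
    simp [PowerSeries.coeff_rescale, hg]

theorem C_mem_scaled (d : ℕ) (z : ℤ) : PowerSeries.C (z : ℚ) ∈ scaledSubring d := by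
  simp

theorem X_div_mem_scaled {d : ℕ} {c : ℤ} (h : c ∣ d) :
    PowerSeries.C ((c : ℚ)⁻¹) * PowerSeries.X ∈ scaledSubring d := by
  rw [mem_scaled]
  intro l
  rw [PowerSeries.coeff_C_mul, PowerSeries.coeff_X]
  split_ifs with hl
  · subst hl
    obtain ⟨e, he⟩ := h
    by_cases hc : c = 0
    · exact ⟨0, by simp [hc]⟩
    · refine ⟨e, ?_⟩
      have : (d : ℚ) = c * e := by exact_mod_cast he
      have hc' : (c : ℚ) ≠ 0 := by exact_mod_cast hc
      rw [this]; field_simp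
  · exact ⟨0, by simp⟩

/-- `1 / (1 + X / c)` lies in the scaled subring when `c ∣ d`; the division is avoided by writing
the relation as `g * (X + c) = c`. -/
theorem exists_inv_scaled {d : ℕ} {c : ℤ} (hc : c ≠ 0) (h : c ∣ d) :
    ∃ g ∈ scaledSubring d, g * (PowerSeries.X + PowerSeries.C (c : ℚ)) = PowerSeries.C (c : ℚ) := by
  have hc' : (c : ℚ) ≠ 0 := by exact_mod_cast hc
  refine ⟨PowerSeries.rescale (-(c : ℚ)⁻¹) (PowerSeries.mk 1), ?_, ?_⟩
  · rw [mem_scaled]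
    intro l
    obtain ⟨e, he⟩ := h
    refine ⟨(-e) ^ l, ?_⟩
    have : (d : ℚ) = c * e := by exact_mod_cast he
    rw [PowerSeries.coeff_rescale, this]
    simp [← mul_pow]
    field_simp
  · have := congrArg (PowerSeries.rescale (-(c : ℚ)⁻¹)) (PowerSeries.mk_one_mul_one_sub_eq_one (S := ℚ))
    rw [map_mul, map_sub, map_one, PowerSeries.rescale_X] at this
    have h2 : (PowerSeries.X + PowerSeries.C (c : ℚ)) =
      (1 - PowerSeries.C (-(c : ℚ)⁻¹) * PowerSeries.X) * PowerSeries.C (c : ℚ) := by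
      have : PowerSeries.C ((c : ℚ)⁻¹) * PowerSeries.C (c : ℚ) = 1 := by
        rw [← map_mul, inv_mul_cancel₀ hc', map_one]
      rw [map_neg]
      linear_combination -PowerSeries.X * this
    rw [h2, ← mul_assoc, this, one_mul]

/-- A polynomial of degree at most `n` that is integer-valued on `ℕ` has its `l`-th coefficient in
`d⁻ˡ ℤ` as soon as `d` is a common multiple of `1, …, n`. -/
theorem scaled_of_intValued {n d : ℕ} (hd : ∀ l, 1 ≤ l → l ≤ n → l ∣ d) (Q : Polynomial ℚ)
    (hdeg : Q.natDegree ≤ n) (hQ : ∀ N : ℕ, ∃ z : ℤ, Q.eval (N : ℚ) = z) :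
    (Q : PowerSeries ℚ) ∈ scaledSubring d := by
  -- `bin l` is the binomial polynomial `binom(X, l)`
  let bin : ℕ → Polynomial ℚ := fun l =>
    ∏ i ∈ range l, (Polynomial.C ((i + 1 : ℚ)⁻¹) * (Polynomial.X - Polynomial.C (i : ℚ)))
  have hbin : ∀ l N : ℕ, (bin l).eval (N : ℚ) = (N.choose l : ℚ) := by
    intro l N
    induction l with
    | zero => simp [bin]
    | succ l ih =>
      have h1 : bin (l + 1) = bin l *
        (Polynomial.C ((l + 1 : ℚ)⁻¹) * (Polynomial.X - Polynomial.C (l : ℚ))) := by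
        simp only [bin]
        rw [prod_range_succ]
      rw [h1, Polynomial.eval_mul, ih]
      simp only [Polynomial.eval_mul, Polynomial.eval_C, Polynomial.eval_sub, Polynomial.eval_X]
      have h2 : (N.choose (l + 1) : ℚ) * (l + 1) = N.choose l * (N - l) := by
        rcases le_or_gt l N with h | h
        · have := Nat.choose_succ_right_eq N l
          rw [← Nat.cast_sub h]; exact_mod_cast this
        · simp [Nat.choose_eq_zero_of_lt h, Nat.choose_eq_zero_of_lt (Nat.lt_succ_of_lt h)]
      have h3 : (l + 1 : ℚ) ≠ 0 := by positivity
      field_simp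
      linarith
  have hbindeg : ∀ l ≤ n, (bin l).natDegree ≤ n := by
    intro l hl
    refine (Polynomial.natDegree_prod_le _ _).trans ?_
    refine (Finset.sum_le_card_nsmul _ _ 1 ?_).trans (by simpa using hl)
    intro i _
    refine (Polynomial.natDegree_C_mul_le _ _).trans ?_
    exact (Polynomial.natDegree_X_sub_C _).le
  have hbinmem : ∀ l ≤ n, (bin l : PowerSeries ℚ) ∈ scaledSubring d := by
    intro l hl
    cases l with
    | zero => simp [bin]
    | succ l =>
      have e : (bin (l + 1) : PowerSeries ℚ) =
          (PowerSeries.C (((l + 1 : ℕ) : ℤ) : ℚ)⁻¹ * PowerSeries.X) *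
          ∏ i ∈ range l, (PowerSeries.C (((i + 1 : ℕ) : ℤ) : ℚ)⁻¹ * PowerSeries.X - 1) := by
        have h0 : bin (l + 1) = (Polynomial.C ((l + 1 : ℚ)⁻¹) * Polynomial.X) *
            ∏ i ∈ range l, (Polynomial.C ((i + 1 : ℚ)⁻¹) * Polynomial.X - 1) := by
          simp only [bin]
          rw [prod_mul_distrib, prod_range_succ, prod_range_succ' (fun i : ℕ => Polynomial.X - Polynomial.C (i : ℚ))]
          have : ∏ i ∈ range l, (Polynomial.C ((i + 1 : ℚ)⁻¹) * Polynomial.X - 1) =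
            ∏ i ∈ range l, (Polynomial.C ((i + 1 : ℚ)⁻¹) * (Polynomial.X - Polynomial.C ((i + 1 : ℕ) : ℚ))) := by
            refine prod_congr rfl fun i _ => ?_
            rw [mul_sub, ← Polynomial.C_mul]
            have h3 : (i + 1 : ℚ) ≠ 0 := by positivity
            push_cast
            rw [inv_mul_cancel₀ h3, map_one]
          rw [this, prod_mul_distrib]
          simp
          ring
        rw [h0, Polynomial.coe_mul, ← Polynomial.coeToPowerSeries.ringHom_apply (φ := ∏ i ∈ range l, _), map_prod]
        simp
      rw [e]
      refine mul_mem (X_div_mem_scaled ?_) (prod_mem fun i hi => sub_mem (X_div_mem_scaled ?_) (one_mem _))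
      · exact_mod_cast hd _ (by omega) hl
      · exact_mod_cast hd _ (by omega) (by have := mem_range.1 hi; omega)
  choose z hz using hQ
  -- Newton interpolation: both sides have degree at most `n` and agree at `0, …, n`
  have hQe : Q = ∑ l ∈ range (n + 1), Polynomial.C (((fwdDiff 1)^[l] z 0 : ℤ) : ℚ) * bin l := by
    refine Polynomial.eq_of_degrees_lt_of_eval_index_eq (v := fun i : ℕ => (i : ℚ)) (range (n + 1))
      (fun i _ j _ h => Nat.cast_injective h) ?_ ?_ ?_
    · rw [card_range, Polynomial.degree_lt_iff_coeff_zero]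
      intro m hm
      exact Polynomial.coeff_eq_zero_of_natDegree_lt (by omega)
    · rw [card_range, Polynomial.degree_lt_iff_coeff_zero]
      intro m hm
      rw [Polynomial.finsetSum_coeff]
      refine sum_eq_zero fun l hl => ?_
      rw [Polynomial.coeff_C_mul, Polynomial.coeff_eq_zero_of_natDegree_lt, mul_zero]
      have := hbindeg l (by have := mem_range.1 hl; omega)
      omega
    · intro N hN
      have h1 := shift_eq_sum_fwdDiff_iter 1 z N 0
      rw [zero_add, nsmul_one, Nat.cast_id] at h1
      rw [hz, h1, Polynomial.eval_finsetSum]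
      push_cast
      simp only [Polynomial.eval_mul, Polynomial.eval_C, hbin]
      have hNn : N + 1 ≤ n + 1 := mem_range.1 hN
      rw [← sum_subset (range_mono hNn)]
      · exact sum_congr rfl fun l _ => by simp [mul_comm]
      · intro l _ hl
        rw [Nat.choose_eq_zero_of_lt (by simpa using hl)]; simp
  rw [hQe, ← Polynomial.coeToPowerSeries.ringHom_apply, map_sum]
  refine sum_mem fun l hl => ?_
  rw [map_mul]
  refine mul_mem ?_ (hbinmem l (by have := mem_range.1 hl; omega))
  simp

/-! ### Partial fractions -/

/-- The product is `(-1) ^ k * k! * (n - k)!`. -/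
theorem prod_erase_dvd_factorial {n k : ℕ} (hk : k ≤ n) :
    (∏ j ∈ (range (n + 1)).erase k, ((j : ℤ) - k)) ∣ (n.factorial : ℤ) := by
  obtain ⟨m, rfl⟩ := Nat.exists_eq_add_of_le hk
  have h1 : ∏ j ∈ (range (k + m + 1)).erase k, ((j : ℤ) - k) =
      ∏ j ∈ range (k + 1 + m), (if j = k then (1 : ℤ) else (j : ℤ) - k) := by
    rw [show k + 1 + m = k + m + 1 by omega,
      ← prod_erase (range (k + m + 1)) (a := k) (by simp)]
    exact prod_congr rfl fun j hj => by rw [if_neg (ne_of_mem_erase hj)]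
  have h2 : ∏ j ∈ range k, (if j = k then (1 : ℤ) else (j : ℤ) - k) = (-1) ^ k * k.factorial := by
    rw [← prod_range_reflect, ← prod_range_add_one_eq_factorial]
    push_cast
    rw [← card_range k, ← prod_const, card_range, ← prod_mul_distrib]
    refine prod_congr rfl fun j hj => ?_
    have := mem_range.1 hj
    rw [if_neg (by omega)]
    omega
  have h3 : ∏ j ∈ range m, (if k + 1 + j = k then (1 : ℤ) else ((k + 1 + j : ℕ) : ℤ) - k)
      = m.factorial := by
    rw [← prod_range_add_one_eq_factorial]
    push_cast
    refine prod_congr rfl fun j _ => ?_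
    rw [if_neg (by omega)]
    ring
  rw [h1, prod_range_add, prod_range_succ, if_pos rfl, mul_one, h2, h3, mul_assoc]
  rw [(isUnit_one.neg.pow k).mul_left_dvd]
  exact_mod_cast Nat.factorial_mul_factorial_dvd_factorial_add k m

/-- The series `n! / ∏_{j ≠ k} (X + j - k)` lies in the scaled subring. -/
theorem exists_inv_denominator {n d k : ℕ} (hd : ∀ l, 1 ≤ l → l ≤ n → l ∣ d) (hk : k ≤ n) :
    ∃ g ∈ scaledSubring d,
      g * ∏ j ∈ (range (n + 1)).erase k, (PowerSeries.X + PowerSeries.C ((j : ℚ) - k)) =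
        PowerSeries.C (n.factorial : ℚ) := by
  have hJ : ∀ j ∈ (range (n + 1)).erase k, ∃ g ∈ scaledSubring d,
      g * (PowerSeries.X + PowerSeries.C (((j : ℤ) - k : ℤ) : ℚ)) =
        PowerSeries.C (((j : ℤ) - k : ℤ) : ℚ) := by
    intro j hj
    have hjk := ne_of_mem_erase hj
    have hjn := mem_range.1 (mem_of_mem_erase hj)
    refine exists_inv_scaled (by omega) ?_
    exact Int.natAbs_dvd.1 (Int.natCast_dvd_natCast.2 (hd _ (by omega) (by omega)))
  choose! g hg hgmul using hJ
  obtain ⟨e, he⟩ := prod_erase_dvd_factorial hk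
  refine ⟨PowerSeries.C (e : ℚ) * ∏ j ∈ (range (n + 1)).erase k, g j,
    mul_mem (C_mem_scaled d e) (prod_mem hg), ?_⟩
  have h1 := prod_congr (rfl : (range (n + 1)).erase k = _) hgmul
  rw [prod_mul_distrib, ← map_prod] at h1
  push_cast at h1
  rw [mul_assoc, h1, ← map_mul]
  congr 1
  have : (n.factorial : ℚ) = (∏ j ∈ (range (n + 1)).erase k, ((j : ℚ) - k)) * e := by
    exact_mod_cast he
  rw [this, mul_comm]

/-- Denominators of partial fraction coefficients: if all the Taylor expansions of `P` at the points
`-k` lie in the scaled subring, then the coefficients `a i k` of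
`n! ^ (s + 1) * P(t) / ∏ (t + j) ^ (s + 1)` satisfy `d ^ (s + 1 - i) * a i k ∈ ℤ`. -/
theorem coeff_integrality (P : Polynomial ℚ) (a : ℕ → ℕ → ℚ) (s n d : ℕ)
    (hd : ∀ l, 1 ≤ l → l ≤ n → l ∣ d)
    (hP : ∀ k ≤ n, ((P.comp (Polynomial.X - Polynomial.C (k : ℚ)) : Polynomial ℚ) : PowerSeries ℚ)
      ∈ scaledSubring d)
    (h : ∀ t : ℚ, (∀ k ∈ range (n + 1), t + (k : ℚ) ≠ 0) →
      P.eval t * (n.factorial : ℚ) ^ (s + 1) / ∏ j ∈ range (n + 1), (t + (j : ℚ)) ^ (s + 1) =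
        ∑ i ∈ Icc 1 s, ∑ k ∈ range (n + 1), a i k / (t + (k : ℚ)) ^ i)
    (k : ℕ) (hk : k ≤ n) (i : ℕ) (hi : 1 ≤ i) (his : i ≤ s) :
    ∃ z : ℤ, (d : ℚ) ^ (s + 1 - i) * a i k = z := by
  set J := (range (n + 1)).erase k with hJ
  have hkmem : k ∈ range (n + 1) := mem_range.2 (by omega)
  let L : ℕ → Polynomial ℚ := fun j => Polynomial.X + Polynomial.C ((j : ℚ) - k)
  let H : Polynomial ℚ := ∑ i ∈ Icc 1 s, ∑ j ∈ J,
    Polynomial.C (a i j) * (∏ l ∈ J.erase j, L l) ^ (s + 1) * L j ^ (s + 1 - i)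
  let S : Polynomial ℚ := ∑ i ∈ Icc 1 s, Polynomial.C (a i k) * Polynomial.X ^ (s + 1 - i)
  -- the expansion multiplied by its common denominator, in the variable `X = t + k`
  have hid : P.comp (Polynomial.X - Polynomial.C (k : ℚ)) *
      Polynomial.C ((n.factorial : ℚ) ^ (s + 1)) =
      (∏ j ∈ J, L j) ^ (s + 1) * S + Polynomial.X ^ (s + 1) * H := by
    -- at the points `x = N + n + 1` no denominator `x + j - k` vanishes
    refine Polynomial.eq_of_infinite_eval_eq _ _
      (Set.infinite_of_injective_forall_mem (f := fun N : ℕ => ((N + n + 1 : ℕ) : ℚ))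
        (fun x y hxy => by have : x + n + 1 = y + n + 1 := Nat.cast_injective hxy; omega) ?_)
    intro N
    set x : ℚ := ((N + n + 1 : ℕ) : ℚ) with hx
    have hkn : (k : ℚ) ≤ n := by exact_mod_cast hk
    have hxpos : 0 < x := by rw [hx]; positivity
    have hpos : ∀ j : ℕ, 0 < x + ((j : ℚ) - k) := by
      intro j
      have : (0 : ℚ) ≤ j := by positivity
      have : (0 : ℚ) ≤ N := by positivity
      rw [hx]; push_cast; linarith
    have ht := h (x - k) (fun j _ => by have := hpos j; intro h0; linarith)
    have e1 : ∀ j : ℕ, x - k + (j : ℚ) = x + ((j : ℚ) - k) := fun j => by ring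
    simp only [e1] at ht
    rw [prod_pow, ← mul_prod_erase _ _ hkmem, sub_self, add_zero, ← hJ] at ht
    have hDpos : 0 < ∏ j ∈ J, (x + ((j : ℚ) - k)) := prod_pos fun j _ => hpos j
    rw [div_eq_iff (pow_ne_zero _ (mul_pos hxpos hDpos).ne')] at ht
    have e2 : (P.comp (Polynomial.X - Polynomial.C (k : ℚ))).eval x = P.eval (x - k) := by
      simp [Polynomial.eval_comp]
    simp only [Set.mem_ofPred_eq, Polynomial.eval_mul, e2, Polynomial.eval_C, Polynomial.eval_add,
      Polynomial.eval_pow, Polynomial.eval_X, S, H, L, Polynomial.eval_finsetSum,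
      Polynomial.eval_prod]
    rw [ht, sum_mul, mul_sum, mul_sum, ← sum_add_distrib]
    refine sum_congr rfl fun i hi => ?_
    have his : i ≤ s := (mem_Icc.1 hi).2
    have key : ∀ y : ℚ, y ≠ 0 → y ^ (s + 1) = y ^ (s + 1 - i) * y ^ i := fun y _ => by
      rw [← pow_add]; congr 1; omega
    rw [← add_sum_erase _ _ hkmem, ← hJ, sub_self, add_zero, add_mul, sum_mul, mul_sum]
    congr 1
    · rw [mul_pow, key x hxpos.ne']
      field_simp
    · refine sum_congr rfl fun j hj => ?_
      rw [← mul_prod_erase J _ hj, mul_pow, mul_pow, key _ (hpos j).ne']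
      have := (hpos j).ne'
      field_simp
  obtain ⟨g, hg, hgD⟩ := exists_inv_denominator hd hk
  have hmem := mul_mem (hP k hk) (pow_mem hg (s + 1))
  obtain ⟨z, hz⟩ := mem_scaled.1 hmem (s + 1 - i)
  refine ⟨z, ?_⟩
  rw [← hz]
  congr 1
  have hf : (n.factorial : ℚ) ^ (s + 1) ≠ 0 := pow_ne_zero _ (by exact_mod_cast n.factorial_ne_zero)
  have hser := congrArg (fun p : Polynomial ℚ => (p : PowerSeries ℚ) * g ^ (s + 1)) hid
  have hD : ((∏ j ∈ J, L j : Polynomial ℚ) : PowerSeries ℚ) =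
      ∏ j ∈ J, (PowerSeries.X + PowerSeries.C ((j : ℚ) - k)) := by
    rw [← Polynomial.coeToPowerSeries.ringHom_apply, map_prod]
    refine prod_congr rfl fun j _ => ?_
    rw [Polynomial.coeToPowerSeries.ringHom_apply, Polynomial.coe_add, Polynomial.coe_X,
      Polynomial.coe_C]
  have hS : PowerSeries.coeff (s + 1 - i) (S : PowerSeries ℚ) = a i k := by
    rw [Polynomial.coeff_coe]
    simp only [S, Polynomial.finsetSum_coeff, Polynomial.coeff_C_mul, Polynomial.coeff_X_pow]
    rw [sum_eq_single i]
    · simp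
    · intro j hj hji
      have := (mem_Icc.1 hj).2
      rw [if_neg (by omega), mul_zero]
    · intro hi'
      exact absurd (mem_Icc.2 ⟨hi, his⟩) hi'
  simp only [Polynomial.coe_mul, Polynomial.coe_add, Polynomial.coe_pow, Polynomial.coe_X,
    Polynomial.coe_C, hD] at hser
  have hser2 : PowerSeries.C ((n.factorial : ℚ) ^ (s + 1)) *
      (((P.comp (Polynomial.X - Polynomial.C (k : ℚ)) : Polynomial ℚ) : PowerSeries ℚ) *
        g ^ (s + 1)) =
      PowerSeries.C ((n.factorial : ℚ) ^ (s + 1)) * (S : PowerSeries ℚ) +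
        PowerSeries.X ^ (s + 1) * ((H : PowerSeries ℚ) * g ^ (s + 1)) := by
    have h1 := congrArg (· ^ (s + 1)) hgD
    simp only [mul_pow, ← map_pow] at h1
    linear_combination hser + (S : PowerSeries ℚ) * h1
  have hc := congrArg (PowerSeries.coeff (s + 1 - i)) hser2
  rw [map_add, PowerSeries.coeff_C_mul, PowerSeries.coeff_C_mul, PowerSeries.coeff_X_pow_mul',
    if_neg (by omega), add_zero, hS] at hc
  exact (mul_left_cancel₀ hf hc).symm

/-- The polar part at `-k`, evaluated at distance `y` from the pole, has denominator dividing
`d ^ (s + 1)` when the whole function vanishes at that point. -/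
theorem shifted_sum_integrality (a : ℕ → ℕ → ℚ) (s n d : ℕ)
    (hd : ∀ l, 1 ≤ l → l ≤ n → l ∣ d)
    (ha : ∀ k ≤ n, ∀ i, 1 ≤ i → i ≤ s → ∃ z : ℤ, (d : ℚ) ^ (s + 1 - i) * a i k = z)
    (k : ℕ) (hk : k ≤ n) (y : ℚ) (hy : ∀ j : ℕ, y + ((j : ℚ) - k) ≠ 0)
    (hzero : ∑ i ∈ Icc 1 s, ∑ j ∈ range (n + 1), a i j / (y + ((j : ℚ) - k)) ^ i = 0) :
    ∃ z : ℤ, (d : ℚ) ^ (s + 1) * ∑ i ∈ Icc 1 s, a i k / y ^ i = z := by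
  refine padic_int fun p hp => ?_
  have : Fact p.Prime := ⟨hp⟩
  -- one summand is `p`-integral as soon as `d / w` is
  have term : ∀ j ≤ n, ∀ w : ℚ, padicNorm p (d / w) ≤ 1 → ∀ i ∈ Icc 1 s,
      padicNorm p ((d : ℚ) ^ (s + 1) * (a i j / w ^ i)) ≤ 1 := by
    intro j hj w hw i hi
    obtain ⟨hi1, his⟩ := mem_Icc.1 hi
    obtain ⟨z, hz⟩ := ha j hj i hi1 his
    have e : (d : ℚ) ^ (s + 1) * (a i j / w ^ i) = z * (d / w) ^ i := by
      rw [← hz, div_pow, show s + 1 = (s + 1 - i) + i by omega, pow_add]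
      simp only [Nat.add_sub_cancel]
      ring
    have hpow : padicNorm p ((d / w) ^ i) ≤ 1 := by
      rw [show padicNorm p ((d / w) ^ i) = padicNorm p (d / w) ^ i from
        map_pow (IsAbsoluteValue.toAbsoluteValue (padicNorm p)) _ _]
      exact pow_le_one₀ (padicNorm.nonneg _) hw
    rw [e, padicNorm.mul]
    exact mul_le_one₀ (padicNorm.of_int z) (padicNorm.nonneg _) hpow
  rw [mul_sum]
  by_cases hdy : padicNorm p (d / y) ≤ 1
  · exact padicNorm.sum_le' (fun i hi => term k hk y hdy i hi) zero_le_one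
  -- `y` is `p`-adically smaller than every `j - k`, so the polar part at `-k` is rewritten as
  -- minus the sum of the other polar parts
  · have hkmem : k ∈ range (n + 1) := mem_range.2 (by omega)
    have hy0 : y ≠ 0 := by simpa using hy k
    have hypos : 0 < padicNorm p y :=
      lt_of_le_of_ne (padicNorm.nonneg _) (padicNorm.nonzero hy0).symm
    have hlt : padicNorm p y < padicNorm p d := by
      rw [padicNorm.div, not_le, one_lt_div hypos] at hdy
      exact hdy
    have hother : ∀ j ∈ (range (n + 1)).erase k, padicNorm p (d / (y + ((j : ℚ) - k))) ≤ 1 := by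
      intro j hj
      have hjk := ne_of_mem_erase hj
      have hjn := mem_range.1 (mem_of_mem_erase hj)
      have hdvd : ((j : ℤ) - k) ∣ (d : ℤ) :=
        Int.natAbs_dvd.1 (Int.natCast_dvd_natCast.2 (hd _ (by omega) (by omega)))
      obtain ⟨e, he⟩ := hdvd
      have h1 : padicNorm p d ≤ padicNorm p ((j : ℚ) - k) := by
        have : (d : ℚ) = ((j : ℚ) - k) * (e : ℤ) := by exact_mod_cast he
        rw [this, padicNorm.mul]
        exact mul_le_of_le_one_right (padicNorm.nonneg _) (padicNorm.of_int e)
      rw [padicNorm.div, padicNorm.add_eq_max_of_ne (by linarith : padicNorm p y ≠ _) , 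
        max_eq_right (by linarith)]
      exact div_le_one_of_le₀ h1 (padicNorm.nonneg _)
    have e : ∑ i ∈ Icc 1 s, (d : ℚ) ^ (s + 1) * (a i k / y ^ i) =
        - ∑ i ∈ Icc 1 s, ∑ j ∈ (range (n + 1)).erase k,
          (d : ℚ) ^ (s + 1) * (a i j / (y + ((j : ℚ) - k)) ^ i) := by
      simp only [← mul_sum]
      rw [← mul_neg]
      congr 1
      rw [eq_neg_iff_add_eq_zero, ← hzero, ← sum_add_distrib]
      refine sum_congr rfl fun i _ => ?_
      rw [← add_sum_erase _ _ hkmem, sub_self, add_zero]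
    rw [e, padicNorm.neg]
    refine padicNorm.sum_le' (fun i hi => padicNorm.sum_le' (fun j hj => ?_) zero_le_one) zero_le_one
    have hjn := mem_range.1 (mem_of_mem_erase hj)
    exact term j (by omega) _ (hother j hj) i hi

/-! ### The zero set and the numerator -/

theorem den_div_of_coprime {a b : ℕ} (hb : 0 < b) (h : Nat.Coprime a b) :
    ((a : ℚ) / b).den = b := by
  have := Rat.den_div_eq_of_coprime (a := (a : ℤ)) (b := (b : ℤ)) (by exact_mod_cast hb)
    (by simpa using h)
  simpa only [Int.cast_natCast, Nat.cast_inj] using this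

/-- The zero set contains exactly `φ(b)` elements of denominator `b` for each `b ∈ Ψ`. -/
theorem prod_zeroSet {M : Type*} [CommMonoid M] (Psi : Finset ℕ) (hpos : ∀ b ∈ Psi, 0 < b)
    (f : ℕ → M) : ∏ θ ∈ zeroSet Psi, f θ.den = ∏ b ∈ Psi, f b ^ b.totient := by
  rw [zeroSet, prod_biUnion]
  · refine prod_congr rfl fun b hb => ?_
    have hb0 := hpos b hb
    have hden : ∀ θ ∈ ((Icc 1 b).filter fun a => Nat.Coprime a b).image fun a : ℕ => (a : ℚ) / b,
        f θ.den = f b := by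
      intro θ hθ
      obtain ⟨a, ha, rfl⟩ := mem_image.1 hθ
      rw [den_div_of_coprime hb0 (mem_filter.1 ha).2]
    rw [prod_congr rfl hden, prod_const, card_image_of_injective]
    · congr 1
      rw [← Nat.filter_coprime_Ico_eq_totient b 1]
      congr 1
      ext x
      simp only [mem_filter, mem_Icc, mem_Ico, Nat.coprime_comm (m := x)]
      omega
    · intro x y hxy
      have hb' : (b : ℚ) ≠ 0 := by exact_mod_cast hb0.ne'
      have : (x : ℚ) = y := by simpa [div_left_inj' hb'] using hxy
      exact_mod_cast this
  · intro b hb b' hb' hne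
    rw [Function.onFun, disjoint_left]
    intro θ h1 h2
    obtain ⟨a, ha, rfl⟩ := mem_image.1 h1
    obtain ⟨a', ha', h⟩ := mem_image.1 h2
    apply hne
    rw [← den_div_of_coprime (hpos b hb) (mem_filter.1 ha).2, ← h,
      den_div_of_coprime (hpos b' hb') (mem_filter.1 ha').2]

theorem zeroSet_pos_le {Psi : Finset ℕ} (hpos : ∀ b ∈ Psi, 0 < b) {θ : ℚ}
    (h : θ ∈ zeroSet Psi) : 0 < θ ∧ θ ≤ 1 := by
  obtain ⟨b, hb, h1⟩ := mem_biUnion.1 h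
  obtain ⟨a, ha, rfl⟩ := mem_image.1 h1
  obtain ⟨h2, h3⟩ := mem_Icc.1 (mem_filter.1 ha).1
  have hb' : (0 : ℚ) < b := by exact_mod_cast hpos b hb
  have ha' : (0 : ℚ) < a := by exact_mod_cast h2
  have hab : (a : ℚ) ≤ b := by exact_mod_cast h3
  exact ⟨div_pos ha' hb', (div_le_one hb').2 hab⟩

theorem zeroSet_symm {Psi : Finset ℕ} (hpos : ∀ b ∈ Psi, 0 < b) {θ : ℚ}
    (h : θ ∈ zeroSet Psi) (h1 : θ < 1) : 1 - θ ∈ zeroSet Psi := by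
  obtain ⟨b, hb, h2⟩ := mem_biUnion.1 h
  obtain ⟨a, ha, rfl⟩ := mem_image.1 h2
  obtain ⟨h3, h4⟩ := mem_filter.1 ha
  have hb' : (0 : ℚ) < b := by exact_mod_cast hpos b hb
  have hab : a < b := by
    have := (div_lt_one hb').1 h1
    exact_mod_cast this
  refine mem_biUnion.2 ⟨b, hb, mem_image.2 ⟨b - a, mem_filter.2 ⟨?_, ?_⟩, ?_⟩⟩
  · rw [mem_Icc]; omega
  · exact (Nat.coprime_self_sub_left hab.le).2 h4
  · rw [Nat.cast_sub hab.le]; field_simp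

/-- `∏_{p ∣ b} p ^ ⌊m / (p - 1)⌋`, the factor making up for the failure of divisibility by `m!` at
the primes dividing `b`. -/
def minorFactor (b m : ℕ) : ℕ := ∏ p ∈ b.primeFactors, p ^ (m / (p - 1))

/-- The block `b ^ m * (∏_{p ∣ b} p ^ ⌊m / (p - 1)⌋) * ∏_{j < m} (X + j + θ) / m!`, where `b` is the
denominator of `θ`; the power of `b` is absorbed into the linear factors. -/
def blockPoly (θ : ℚ) (m : ℕ) : Polynomial ℚ :=
  Polynomial.C ((minorFactor θ.den m : ℚ) / m.factorial) *
    ∏ j ∈ range m, (Polynomial.C (θ.den : ℚ) * Polynomial.X +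
      Polynomial.C ((θ.den : ℚ) * j + θ.num))

theorem blockPoly_natDegree (θ : ℚ) (m : ℕ) : (blockPoly θ m).natDegree ≤ m := by
  refine (Polynomial.natDegree_C_mul_le _ _).trans ((Polynomial.natDegree_prod_le _ _).trans ?_)
  refine (Finset.sum_le_card_nsmul _ _ 1 ?_).trans (by simp)
  intro j _
  exact Polynomial.natDegree_linear_le

theorem blockPoly_eval (θ : ℚ) (m : ℕ) (t : ℚ) : (blockPoly θ m).eval t =
    (θ.den ^ m * minorFactor θ.den m : ℕ) / (m.factorial : ℚ) * ∏ j ∈ range m, (t + j + θ) := by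
  have h : ∀ j : ℕ, (θ.den : ℚ) * t + ((θ.den : ℚ) * j + θ.num) = θ.den * (t + j + θ) := by
    intro j
    have := Rat.den_mul_eq_num θ
    linear_combination -this
  rw [blockPoly, Polynomial.eval_mul, Polynomial.eval_prod]
  simp only [Polynomial.eval_C, Polynomial.eval_add, Polynomial.eval_mul, Polynomial.eval_X, h]
  rw [prod_mul_distrib, prod_const, card_range]
  push_cast
  ring

theorem blockPoly_eval_int (θ : ℚ) (m : ℕ) (N : ℤ) : ∃ z : ℤ, (blockPoly θ m).eval (N : ℚ) = z := by
  obtain ⟨z, hz⟩ := fact_dvd_prod θ.den m θ.den_pos (θ.den * N + θ.num)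
  refine ⟨z, ?_⟩
  have hf : (m.factorial : ℚ) ≠ 0 := by exact_mod_cast m.factorial_ne_zero
  have hz' := congrArg (Int.cast : ℤ → ℚ) hz
  push_cast at hz'
  rw [blockPoly, Polynomial.eval_mul, Polynomial.eval_prod, Polynomial.eval_C, minorFactor,
    div_mul_eq_mul_div, div_eq_iff hf, mul_comm (z : ℚ), ← hz']
  push_cast
  congr 1
  refine prod_congr rfl fun j _ => ?_
  simp only [Polynomial.eval_C, Polynomial.eval_add, Polynomial.eval_mul, Polynomial.eval_X]
  ring

/-- The numerator of the auxiliary function without the factor `n! ^ (s + 1)`, written with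
`c = r n`, `m = n / den r` and `K m = (2 r + 1) n`: for each `θ` it contains `K` blocks of
length `m`, the `q`-th one shifted by `q m - c`. -/
def numerPoly (Psi : Finset ℕ) (K m c : ℕ) : Polynomial ℚ :=
  (Polynomial.X - Polynomial.C (c : ℚ)) * ∏ θ ∈ zeroSet Psi, ∏ q ∈ range K,
    (blockPoly θ m).comp (Polynomial.X + Polynomial.C ((((q * m : ℕ) : ℤ) - (c : ℤ) : ℤ) : ℚ))

/-- All the Taylor expansions of the numerator at the points `-k` lie in the scaled subring. -/
theorem numerPoly_mem {d n m : ℕ} (hd : ∀ l, 1 ≤ l → l ≤ n → l ∣ d) (hmn : m ≤ n)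
    (Psi : Finset ℕ) (K c k : ℕ) :
    (((numerPoly Psi K m c).comp (Polynomial.X - Polynomial.C (k : ℚ)) : Polynomial ℚ) :
      PowerSeries ℚ) ∈ scaledSubring d := by
  rw [numerPoly, Polynomial.mul_comp, Polynomial.prod_comp, Polynomial.coe_mul]
  refine mul_mem ?_ ?_
  · have h1 : ∀ N : ℕ, (PowerSeries.C (N : ℚ)) ∈ scaledSubring d := fun N => by simp
    have hX : PowerSeries.X ∈ scaledSubring d := by
      simpa using X_div_mem_scaled (d := d) (c := 1) (one_dvd _)
    simp only [Polynomial.sub_comp, Polynomial.X_comp, Polynomial.C_comp, Polynomial.coe_sub,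
      Polynomial.coe_X, Polynomial.coe_C]
    exact sub_mem (sub_mem hX (h1 k)) (h1 c)
  · rw [← Polynomial.coeToPowerSeries.ringHom_apply, map_prod]
    refine prod_mem fun θ _ => ?_
    rw [Polynomial.prod_comp, map_prod]
    refine prod_mem fun q _ => ?_
    rw [Polynomial.coeToPowerSeries.ringHom_apply]
    refine scaled_of_intValued hd _ ?_ ?_
    · refine Polynomial.natDegree_comp_le.trans ?_
      rw [Polynomial.natDegree_X_sub_C, mul_one]
      refine Polynomial.natDegree_comp_le.trans ?_
      rw [Polynomial.natDegree_X_add_C, mul_one]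
      exact (blockPoly_natDegree θ m).trans hmn
    · intro N
      obtain ⟨z, hz⟩ := blockPoly_eval_int θ m (N - k + (((q * m : ℕ) : ℤ) - c))
      refine ⟨z, ?_⟩
      rw [← hz]
      simp [Polynomial.eval_comp]

theorem prod_range_blocks {M : Type*} [CommMonoid M] (f : ℕ → M) (K m : ℕ) :
    ∏ q ∈ range K, ∏ j ∈ range m, f (q * m + j) = ∏ j ∈ range (K * m), f j := by
  induction K with
  | zero => simp
  | succ K ih => rw [prod_range_succ, ih, Nat.succ_mul, prod_range_add]

theorem numerPoly_eval (Psi : Finset ℕ) (hpos : ∀ b ∈ Psi, 0 < b) (K m c : ℕ) (t : ℚ) :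
    (numerPoly Psi K m c).eval t =
      ((∏ b ∈ Psi, (b ^ m * minorFactor b m) ^ (K * b.totient) : ℕ) : ℚ) /
        (m.factorial : ℚ) ^ (K * (zeroSet Psi).card) *
      ((t - c) * ∏ θ ∈ zeroSet Psi, ∏ j ∈ range (K * m), (t - c + j + θ)) := by
  have h1 : ∀ θ : ℚ, ∏ q ∈ range K, ((blockPoly θ m).comp
      (Polynomial.X + Polynomial.C ((((q * m : ℕ) : ℤ) - (c : ℤ) : ℤ) : ℚ))).eval t =
      ((θ.den ^ m * minorFactor θ.den m : ℕ) : ℚ) ^ K / (m.factorial : ℚ) ^ K *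
        ∏ j ∈ range (K * m), (t - c + j + θ) := by
    intro θ
    simp only [Polynomial.eval_comp, blockPoly_eval]
    rw [prod_mul_distrib, prod_const, card_range, div_pow, ← prod_range_blocks]
    congr 1
    refine prod_congr rfl fun q _ => prod_congr rfl fun j _ => ?_
    simp
    ring
  rw [numerPoly, Polynomial.eval_mul, Polynomial.eval_prod]
  simp only [Polynomial.eval_prod, h1]
  rw [prod_mul_distrib, prod_div_distrib, prod_const,
    prod_zeroSet Psi hpos (fun b => ((b ^ m * minorFactor b m : ℕ) : ℚ) ^ K)]
  simp only [← pow_mul]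
  rw [Nat.cast_prod]
  simp only [Nat.cast_pow, Polynomial.eval_sub, Polynomial.eval_X, Polynomial.eval_C]
  ring

/-- The real powers defining `A₁ⁿ A₂ⁿ` have natural exponents, because `(2 r + 1) n = K m` and
`p - 1 ∣ m` for the primes involved. -/
theorem arithFactor_eq (Psi : Finset ℕ) (r : ℚ) (n K m : ℕ)
    (hK : (2 * (r : ℝ) + 1) * n = K * m)
    (hdvd : ∀ b ∈ Psi, ∀ p ∈ b.primeFactors, p - 1 ∣ m) :
    A1 Psi r ^ n * A2 Psi r ^ n =
      ((∏ b ∈ Psi, (b ^ m * minorFactor b m) ^ (K * b.totient) : ℕ) : ℝ) := by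
  rw [A1, A2, ← prod_pow, ← prod_pow, ← prod_mul_distrib]
  push_cast
  refine prod_congr rfl fun b hb => ?_
  rw [← prod_pow, mul_pow, minorFactor]
  congr 1
  · rw [← Real.rpow_mul_natCast (by positivity), ← pow_mul, ← Real.rpow_natCast]
    congr 1
    push_cast
    linear_combination (b.totient : ℝ) * hK
  · push_cast
    rw [← prod_pow]
    refine prod_congr rfl fun p hp => ?_
    have hp1 := (Nat.prime_of_mem_primeFactors hp).one_lt
    rw [← Real.rpow_mul_natCast (by positivity), ← pow_mul, ← Real.rpow_natCast]
    congr 1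
    obtain ⟨e, he⟩ := hdvd b hb p hp
    have hpr : (p : ℝ) - 1 ≠ 0 := by
      have : (1 : ℝ) < p := by exact_mod_cast hp1
      linarith
    have hm : (m : ℝ) = (p - 1) * e := by
      rw [he]; push_cast [Nat.cast_sub hp1.le]; ring
    rw [he, Nat.mul_div_cancel_left _ (Nat.sub_pos_of_lt hp1)]
    push_cast
    rw [hm] at hK
    field_simp
    linear_combination (b.totient : ℝ) * hK

/-! ### Conclusion -/

theorem dvd_dlcm {n l : ℕ} (h1 : 1 ≤ l) (h2 : l ≤ n) : l ∣ dlcm n :=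
  Finset.dvd_lcm (f := id) (mem_Icc.2 ⟨h1, h2⟩)

theorem int_sum {ι : Type*} {S : Finset ι} {f : ι → ℚ} (h : ∀ i ∈ S, ∃ z : ℤ, f i = z) :
    ∃ z : ℤ, ∑ i ∈ S, f i = z := by
  choose! g hg using h
  exact ⟨∑ i ∈ S, g i, by rw [sum_congr rfl hg]; simp⟩

/-- Arithmetic lemma: with `ρ_i = ∑_{k=0}^{n} a_{i,k}` and
`ρ_{0,θ} = −∑_{k=0}^{n}∑_{ℓ=0}^{k}∑_{i=1}^{s} a_{i,k}/(ℓ+θ)ⁱ`, one has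
`d_n^{s+1−i}·ρ_i ∈ ℤ` for all odd `3 ≤ i ≤ s`, and `d_{n+1}^{s+1}·ρ_{0,θ} ∈ ℤ`
for all `θ ∈ 𝓕_B`. -/
theorem arithmetic_lemma
    (B : ℝ) (hB : 0 < B) (r : ℚ) (hr : 0 < r)
    (Psi : Finset ℕ) (hPsi : ∀ b : ℕ, b ∈ Psi ↔ 0 < b ∧ (Nat.totient b : ℝ) ≤ B)
    (s : ℕ) (hs : Odd s) (hsB : 10 * (2 * (r : ℝ) + 1) * B ^ 2 ≤ (s : ℝ))
    (hFB : ((zeroSet Psi).card : ℝ) ≤ B ^ 2)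
    (n : ℕ) (hn : 0 < n) (hPn : Pconst Psi r ∣ n)
    (a : ℕ → ℕ → ℚ)
    (ha : ∀ t : ℝ, (∀ k ∈ Finset.range (n + 1), t + (k : ℝ) ≠ 0) →
      Rfun Psi r s n t = ∑ i ∈ Finset.Icc 1 s, ∑ k ∈ Finset.range (n + 1),
        (a i k : ℝ) / (t + (k : ℝ)) ^ i) :
    (∀ i : ℕ, Odd i → 3 ≤ i → i ≤ s →
      ∃ z : ℤ, ((dlcm n : ℚ)) ^ (s + 1 - i) * ∑ k ∈ Finset.range (n + 1), a i k = z) ∧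
    (∀ θ ∈ zeroSet Psi,
      ∃ z : ℤ, ((dlcm (n + 1) : ℚ)) ^ (s + 1) *
        (- ∑ k ∈ Finset.range (n + 1), ∑ ℓ ∈ Finset.range (k + 1),
            ∑ i ∈ Finset.Icc 1 s, a i k / ((ℓ : ℚ) + θ) ^ i) = z) := by
  have hpos : ∀ b ∈ Psi, 0 < b := fun b hb => ((hPsi b).1 hb).1
  set m := n / r.den with hm
  set K := 2 * r.num.toNat + r.den with hKdef
  set c := r.num.toNat * m with hc
  have hPd : r.den * (Psi.biUnion Nat.primeFactors).lcm (fun p => p - 1) ∣ n :=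
    dvd_trans ⟨2, by rw [Pconst]; ring⟩ hPn
  have hnm : n = r.den * m := (Nat.mul_div_cancel' (dvd_trans (Dvd.intro _ rfl) hPd)).symm
  have hmn : m ≤ n := Nat.div_le_self _ _
  have hdvd : ∀ b ∈ Psi, ∀ p ∈ b.primeFactors, p - 1 ∣ m := by
    intro b hb p hp
    rw [hnm] at hPd
    exact dvd_trans (Finset.dvd_lcm (f := fun p => p - 1) (mem_biUnion.2 ⟨b, hb, hp⟩))
      (Nat.dvd_of_mul_dvd_mul_left r.den_pos hPd)
  have hrn : r * n = c := by
    have h1 : ((r.num.toNat : ℕ) : ℚ) = r.num := by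
      have : ((r.num.toNat : ℕ) : ℤ) = r.num := Int.toNat_of_nonneg (Rat.num_pos.2 hr).le
      exact_mod_cast this
    have h2 := Rat.mul_den_eq_num r
    rw [hnm, hc]
    push_cast
    rw [h1]
    linear_combination (m : ℚ) * h2
  have hrnR : (r : ℝ) * n = c := by exact_mod_cast congrArg (Rat.cast : ℚ → ℝ) hrn
  have hM : 2 * c + n = K * m := by rw [hKdef, hc]; nth_rewrite 1 [hnm]; ring
  have hK : (2 * (r : ℝ) + 1) * n = K * m := by
    have : (2 * c + n : ℝ) = K * m := by exact_mod_cast hM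
    linear_combination 2 * hrnR + this
  have hexp : ∀ t : ℚ, (∀ k ∈ range (n + 1), t + (k : ℚ) ≠ 0) →
      (numerPoly Psi K m c).eval t * (n.factorial : ℚ) ^ (s + 1) /
        ∏ j ∈ range (n + 1), (t + (j : ℚ)) ^ (s + 1) =
        ∑ i ∈ Icc 1 s, ∑ k ∈ range (n + 1), a i k / (t + (k : ℚ)) ^ i := by
    intro t ht
    have h1 := ha (t : ℝ) (fun k hk => by exact_mod_cast ht k hk)
    rw [Rfun, arithFactor_eq Psi r n K m hK hdvd, hrnR, ← hm, ← hKdef, ← hc, hM] at h1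
    have h2 : ((numerPoly Psi K m c).eval t * (n.factorial : ℚ) ^ (s + 1) /
        ∏ j ∈ range (n + 1), (t + (j : ℚ)) ^ (s + 1) : ℚ) =
        ((∏ b ∈ Psi, (b ^ m * minorFactor b m) ^ (K * b.totient) : ℕ) : ℚ) *
        ((n.factorial : ℚ) ^ (s + 1) / (m.factorial : ℚ) ^ (K * (zeroSet Psi).card)) *
        ((t - c) * ∏ θ ∈ zeroSet Psi, ∏ j ∈ range (K * m), (t - c + j + θ)) /
        ∏ j ∈ range (n + 1), (t + (j : ℚ)) ^ (s + 1) := by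
      rw [numerPoly_eval Psi hpos]; ring
    rw [h2]
    apply Rat.cast_injective (α := ℝ)
    push_cast at h1 ⊢
    exact h1
  have hcoef : ∀ d : ℕ, (∀ l, 1 ≤ l → l ≤ n → l ∣ d) → ∀ k ≤ n, ∀ i, 1 ≤ i → i ≤ s →
      ∃ z : ℤ, (d : ℚ) ^ (s + 1 - i) * a i k = z := fun d hd k hk i hi his =>
    coeff_integrality (numerPoly Psi K m c) a s n d hd
      (fun k _ => numerPoly_mem hd hmn Psi K c k) hexp k hk i hi his
  refine ⟨fun i _ hi3 his => ?_, fun θ hθ => ?_⟩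
  · rw [mul_sum]
    exact int_sum fun k hk => hcoef (dlcm n) (fun l h1 h2 => dvd_dlcm h1 h2) k
      (by have := mem_range.1 hk; omega) i (by omega) his
  · obtain ⟨hθ0, hθ1⟩ := zeroSet_pos_le hpos hθ
    have hdn : ∀ l, 1 ≤ l → l ≤ n → l ∣ dlcm (n + 1) := fun l h1 h2 => dvd_dlcm h1 (by omega)
    have hint := hcoef (dlcm (n + 1)) hdn
    suffices h : ∃ z : ℤ, ∑ k ∈ range (n + 1), ∑ ℓ ∈ range (k + 1),
        (dlcm (n + 1) : ℚ) ^ (s + 1) * ∑ i ∈ Icc 1 s, a i k / ((ℓ : ℚ) + θ) ^ i = z by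
      obtain ⟨z, hz⟩ := h
      refine ⟨-z, ?_⟩
      push_cast
      rw [← hz]
      simp only [mul_neg, mul_sum]
    refine int_sum fun k hk => int_sum fun ℓ hℓ => ?_
    have hkn := mem_range.1 hk
    have hℓk := mem_range.1 hℓ
    rcases hθ1.eq_or_lt with rfl | hlt
    · rw [mul_sum]
      refine int_sum fun i hi => ?_
      obtain ⟨hi1, his⟩ := mem_Icc.1 hi
      obtain ⟨z, hz⟩ := hint k (by omega) i hi1 his
      obtain ⟨e, he⟩ := dvd_dlcm (n := n + 1) (l := ℓ + 1) (by omega) (by omega)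
      refine ⟨z * e ^ i, ?_⟩
      have he' : (dlcm (n + 1) : ℚ) = (ℓ + 1) * e := by exact_mod_cast he
      have hl0 : (ℓ + 1 : ℚ) ≠ 0 := by positivity
      push_cast
      rw [← hz, show s + 1 = (s + 1 - i) + i by omega, pow_add, Nat.add_sub_cancel]
      nth_rewrite 2 [he']
      rw [mul_pow]
      field_simp
    · -- `θ` is not an integer, so no pole is met
      have hne : ∀ N : ℤ, θ ≠ N := by
        rintro N rfl
        have h1 : (0 : ℤ) < N := by exact_mod_cast hθ0
        have h2 : N < 1 := by exact_mod_cast hlt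
        omega
      have hy : ∀ j : ℕ, (ℓ : ℚ) + θ + ((j : ℚ) - k) ≠ 0 := by
        intro j h0
        refine hne ((k : ℤ) - j - ℓ) ?_
        push_cast
        linarith
      refine shifted_sum_integrality a s n (dlcm (n + 1)) hdn hint k (by omega) (ℓ + θ) hy ?_
      have h1 := hexp ((ℓ : ℚ) + θ - k) (fun j _ => by
        have := hy j
        intro h0
        apply this
        linarith)
      have hz : (numerPoly Psi K m c).eval ((ℓ : ℚ) + θ - k) = 0 := by
        rw [numerPoly_eval Psi hpos]
        have h2 : ∏ θ' ∈ zeroSet Psi, ∏ j ∈ range (K * m),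
            ((ℓ : ℚ) + θ - k - c + j + θ') = 0 := by
          -- the zero comes from the symmetric point `1 - θ` and the index `c + k - ℓ - 1`
          have hc0 : 0 < c := by
            rw [hc]
            refine Nat.mul_pos (Int.lt_toNat.2 (by simpa using Rat.num_pos.2 hr)) ?_
            exact Nat.pos_of_ne_zero fun h => by rw [h, mul_zero] at hnm; omega
          refine prod_eq_zero (zeroSet_symm hpos hθ hlt)
            (prod_eq_zero (i := c + k - ℓ - 1) (mem_range.2 (by omega)) ?_)
          rw [show ((c + k - ℓ - 1 : ℕ) : ℚ) = c + k - ℓ - 1 by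
            rw [Nat.cast_sub (by omega), Nat.cast_sub (by omega)]; push_cast; ring]
          ring
        rw [h2]; simp
      rw [hz, zero_mul, zero_div] at h1
      rw [h1]
      refine sum_congr rfl fun i _ => sum_congr rfl fun j _ => ?_
      congr 2
      ring

end
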